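/- Let H be a group scheme over a field k. If the underlying reduced closed subscheme H_red of H is geometrically reduced over k, then H_red is a closed subgroup scheme of H (i.e. the group law, unit and inverse of H restrict to H_red, making it a group scheme and the inclusion H_red ↪ H a homomorphism of group schemes). -/

import Mathlib

open CategoryTheory AlgebraicGeometry Limits Opposite

noncomputable section

namespace Stmt6

abbrev Sp (k : Type) [CommRing k] : Scheme := Spec (CommRingCat.of k)

/-- A (not necessarily commutative) group law on an object of `Over S`:
a functorial group structure on its points. -/
structure GrpLaw {S : Scheme} (X : Over S) where
  grp : ∀ T : Over S, Group (T ⟶ X)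
  comp_mul : ∀ {T T' : Over S} (f : T ⟶ T') (a b : T' ⟶ X),
    letI := grp T; letI := grp T'
    f ≫ (a * b) = (f ≫ a) * (f ≫ b)
  comp_one : ∀ {T T' : Over S} (f : T ⟶ T'),
    letI := grp T; letI := grp T'
    f ≫ (1 : T' ⟶ X) = (1 : T ⟶ X)

/-- A group scheme over `S`. -/
structure GrpSch (S : Scheme) where
  obj : Over S
  law : GrpLaw obj

/-- Homomorphisms of group schemes. -/
def IsGrpHom {S : Scheme} {X Y : Over S} (lX : GrpLaw X) (lY : GrpLaw Y) (φ : X ⟶ Y) : Prop :=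
  ∀ (T : Over S) (a b : T ⟶ X),
    letI := lX.grp T; letI := lY.grp T
    (a * b) ≫ φ = (a ≫ φ) * (b ≫ φ)

def algCl (k : Type) [Field k] : Sp (AlgebraicClosure k) ⟶ Sp k :=
  Spec.map (CommRingCat.ofHom (algebraMap k (AlgebraicClosure k)))

open TensorProduct in
theorem tensor_reduced_fg (k A B : Type) [Field k] [CommRing A] [CommRing B]
    [Algebra k A] [Algebra k B] [Algebra.FiniteType k A] [_root_.IsReduced A]
    [_root_.IsReduced (B ⊗[k] AlgebraicClosure k)] :
    _root_.IsReduced (B ⊗[k] A) := by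
  constructor
  intro z hz
  let ℬ := Module.Basis.ofVectorSpace k B
  obtain ⟨c, rfl⟩ := TensorProduct.eq_repr_basis_left ℬ z
  suffices h : c = 0 by simp [h]
  have hJ : IsJacobsonRing A := isJacobsonRing_of_finiteType (A := k)
  ext i
  have hrad : (⊥ : Ideal A).jacobson = ⊥ := by
    rw [← Ideal.radical_eq_jacobson]
    exact nilradical_eq_zero A
  rw [Finsupp.zero_apply, ← Ideal.mem_bot, ← hrad, Ideal.jacobson, Ideal.mem_sInf]
  rintro m ⟨-, hm⟩
  letI := Ideal.Quotient.field m
  have : Algebra.FiniteType k (A ⧸ m) := inferInstance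
  have : Module.Finite k (A ⧸ m) := finite_of_finite_type_of_isJacobsonRing k (A ⧸ m)
  let ψ : (A ⧸ m) →ₐ[k] AlgebraicClosure k := IsAlgClosed.lift
  let φ : A →ₐ[k] AlgebraicClosure k := ψ.comp (Ideal.Quotient.mkₐ k m)
  have h0 := (hz.map (Algebra.TensorProduct.map (AlgHom.id k B) φ)).eq_zero
  have h1 : ((c.mapRange φ (map_zero φ)).sum fun i n ↦ ℬ i ⊗ₜ[k] n) = 0 := by
    rw [Finsupp.sum_mapRange_index (by simp), ← h0, map_finsuppSum]
    simp
  have h2 := TensorProduct.sum_tmul_basis_left_eq_zero ℬ _ h1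
  have h3 : φ (c i) = 0 := by simpa using DFunLike.congr_fun h2 i
  have h4 : ψ (Ideal.Quotient.mk m (c i)) = 0 := h3
  exact Ideal.Quotient.eq_zero_iff_mem.mp ((map_eq_zero ψ).mp h4)

open TensorProduct in
theorem tensor_reduced (k A B : Type) [Field k] [CommRing A] [CommRing B]
    [Algebra k A] [Algebra k B]
    [_root_.IsReduced A] [_root_.IsReduced (B ⊗[k] AlgebraicClosure k)] :
    _root_.IsReduced (B ⊗[k] A) := by
  refine IsReduced.tensorProduct_of_flat_of_forall_fg fun A' hA' => ?_
  have : Algebra.FiniteType k A' := A'.fg_iff_finiteType.mp hA'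
  have : _root_.IsReduced A' := isReduced_of_injective A'.val Subtype.val_injective
  exact tensor_reduced_fg k A' B

open TensorProduct in
theorem pullback_reduced_affine (k : Type) [Field k] (R S : CommRingCat.{0})
    (f : Spec R ⟶ Spec (.of k)) (g : Spec S ⟶ Spec (.of k))
    (h2 : IsReduced (Spec S))
    (h1 : IsReduced (pullback f
      (Spec.map (CommRingCat.ofHom (algebraMap k (AlgebraicClosure k)))))) :
    IsReduced (pullback f g) := by
  rw [affine_isReduced_iff] at h2
  obtain ⟨φ, rfl⟩ := Spec.map_surjective f
  obtain ⟨ψ, rfl⟩ := Spec.map_surjective g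
  algebraize [φ.hom, ψ.hom]
  have h3 : IsReduced (Spec (.of (R ⊗[k] AlgebraicClosure k))) :=
    @isReduced_of_isOpenImmersion _ _ (pullbackSpecIso k R (AlgebraicClosure k)).inv
      inferInstance h1
  rw [affine_isReduced_iff] at h3
  have := tensor_reduced k S R
  have h4 : IsReduced (Spec (.of (R ⊗[k] S))) := by
    rw [affine_isReduced_iff]; exact this
  exact @isReduced_of_isOpenImmersion _ _ (pullbackSpecIso k R S).hom inferInstance h4

theorem pullback_reduced (k : Type) [Field k] {X Y : Scheme.{0}}
    (f : X ⟶ Spec (.of k)) (g : Y ⟶ Spec (.of k)) [IsReduced Y]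
    (h : IsReduced (pullback f
      (Spec.map (CommRingCat.ofHom (algebraMap k (AlgebraicClosure k)))))) :
    IsReduced (pullback f g) := by
  apply +allowSynthFailures @IsReduced.of_openCover
    (𝒰 := Scheme.Pullback.openCoverOfLeftRight X.affineCover Y.affineCover f g)
  rintro ⟨i, j⟩
  have h1 := (IsReduced.iff_of_openCover _
    (Scheme.Pullback.openCoverOfLeft X.affineCover f _)).mp h i
  have h2 : IsReduced (Y.affineCover.X j) := inferInstance
  exact pullback_reduced_affine k _ _ (X.affineCover.f i ≫ f) (Y.affineCover.f j ≫ g) h2 h1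

theorem factor_red {Z X T : Scheme.{0}} (ρ : Z ⟶ X) [IsClosedImmersion ρ] [Surjective ρ]
    [IsReduced T] (f : T ⟶ X) :
    ∃ g : T ⟶ Z, g ≫ ρ = f := by
  have : IsIso (pullback.snd ρ f) := isIso_of_isClosedImmersion_of_surjective _
  exact ⟨inv (pullback.snd ρ f) ≫ pullback.fst ρ f, by simp [pullback.condition]⟩

theorem GrpLaw.comp_inv {S : Scheme} {X : Over S} (l : GrpLaw X) {T T' : Over S}
    (f : T ⟶ T') (a : T' ⟶ X) :
    f ≫ (l.grp T').inv a = (l.grp T).inv (f ≫ a) := by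
  letI := l.grp T
  letI := l.grp T'
  change f ≫ a⁻¹ = (f ≫ a)⁻¹
  rw [eq_inv_iff_mul_eq_one, ← l.comp_mul, inv_mul_cancel, l.comp_one]

theorem exists_law {S : Scheme} {X Y : Over S} (l : GrpLaw X) (i : Y ⟶ X) [Mono i]
    (hmul : ∀ (T : Over S) (a b : T ⟶ Y), ∃ c : T ⟶ Y,
      c ≫ i = (l.grp T).mul (a ≫ i) (b ≫ i))
    (hone : ∀ T : Over S, ∃ c : T ⟶ Y, c ≫ i = (l.grp T).one)
    (hinv : ∀ (T : Over S) (a : T ⟶ Y), ∃ c : T ⟶ Y, c ≫ i = (l.grp T).inv (a ≫ i)) :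
    ∃ law : GrpLaw Y, IsGrpHom law l i := by
  choose m hm using hmul
  choose e he using hone
  choose v hv using hinv
  let G (T : Over S) : Group (T ⟶ Y) :=
    letI := l.grp T
    letI : Mul (T ⟶ Y) := ⟨m T⟩
    letI : One (T ⟶ Y) := ⟨e T⟩
    letI : Inv (T ⟶ Y) := ⟨v T⟩
    have hm' (a b : T ⟶ Y) : (a * b) ≫ i = (a ≫ i) * (b ≫ i) := hm T a b
    have he' : (1 : T ⟶ Y) ≫ i = 1 := he T
    have hv' (a : T ⟶ Y) : a⁻¹ ≫ i = (a ≫ i)⁻¹ := hv T a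
    Group.ofLeftAxioms
      (fun a b c => by rw [← cancel_mono i]; simp only [hm', mul_assoc])
      (fun a => by rw [← cancel_mono i]; simp only [hm', he', one_mul])
      (fun a => by rw [← cancel_mono i]; simp only [hm', hv', he', inv_mul_cancel])
  refine ⟨⟨G, ?_, ?_⟩, fun T a b => hm T a b⟩
  · intro T T' f a b
    change f ≫ m T' a b = m T (f ≫ a) (f ≫ b)
    rw [← cancel_mono i, Category.assoc, hm, hm]
    exact (l.comp_mul f _ _).trans (by simp only [Category.assoc]; rfl)
  · intro T T' f
    change f ≫ e T' = e T
    rw [← cancel_mono i, Category.assoc, he, he]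
    exact l.comp_one f

/-!
STATEMENT 6: let `H` be a group scheme over a field `k` and let `H_red` be its
underlying reduced closed subscheme (formalized as any reduced scheme `Z` with a
closed immersion `ρ : Z ⟶ H` which is surjective, i.e. a homeomorphism onto `H`).
If `H_red` is geometrically reduced over `k` (its base change to an algebraic
closure is reduced), then `H_red` is a closed subgroup scheme of `H`: the group law
of `H` restricts to a group scheme structure on `H_red` making the inclusion
`H_red ↪ H` a homomorphism of group schemes.
-/
theorem reduction_is_subgroup_of_geometrically_reduced
    (k : Type) [Field k] (H : GrpSch (Sp k))
    (Z : Scheme) (ρ : Z ⟶ H.obj.left)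
    (hρ : IsClosedImmersion ρ) (hred : IsReduced Z)
    (hsurj : Function.Surjective ρ.base)
    (hgeom : IsReduced (pullback (ρ ≫ H.obj.hom) (algCl k))) :
    ∃ law : GrpLaw (Over.mk (ρ ≫ H.obj.hom)),
      IsGrpHom law H.law (Over.homMk ρ rfl : Over.mk (ρ ≫ H.obj.hom) ⟶ H.obj) := by
  have hs : Surjective ρ := ⟨hsurj⟩
  let f := ρ ≫ H.obj.hom
  let Y : Over (Sp k) := Over.mk f
  let i : Y ⟶ H.obj := Over.homMk ρ rfl
  have hi : Mono i := by
    have : Mono i.left := inferInstanceAs (Mono ρ)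
    exact Over.mono_of_mono_left i
  -- maps from reduced schemes factor
  have key : ∀ (T : Over (Sp k)) (_ : IsReduced T.left) (g : T ⟶ H.obj),
      ∃ c : T ⟶ Y, c ≫ i = g := by
    intro T hT g
    obtain ⟨c, hc⟩ := factor_red ρ g.left
    refine ⟨Over.homMk c ?_, ?_⟩
    · change c ≫ ρ ≫ H.obj.hom = T.hom
      rw [← Category.assoc, hc, Over.w]
    · ext1
      exact hc
  refine exists_law H.law i ?_ ?_ ?_
  · intro T a b
    have hP : IsReduced (pullback f f) := pullback_reduced k f f hgeom
    let P : Over (Sp k) := Over.mk (pullback.fst f f ≫ f)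
    let p₁ : P ⟶ Y := Over.homMk (pullback.fst f f) rfl
    let p₂ : P ⟶ Y := Over.homMk (pullback.snd f f) pullback.condition.symm
    have ha : a.left ≫ f = T.hom := Over.w a
    have hb : b.left ≫ f = T.hom := Over.w b
    let t : T ⟶ P := Over.homMk (pullback.lift a.left b.left (ha.trans hb.symm)) (by
      change pullback.lift a.left b.left (ha.trans hb.symm) ≫ pullback.fst f f ≫ f = T.hom
      rw [pullback.lift_fst_assoc, ha])
    have h1 : t ≫ p₁ = a := by
      ext1
      exact pullback.lift_fst _ _ _
    have h2 : t ≫ p₂ = b := by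
      ext1
      exact pullback.lift_snd _ _ _
    obtain ⟨c, hc⟩ := key P hP ((H.law.grp P).mul (p₁ ≫ i) (p₂ ≫ i))
    refine ⟨t ≫ c, ?_⟩
    rw [Category.assoc, hc]
    refine (H.law.comp_mul t _ _).trans ?_
    rw [← Category.assoc, ← Category.assoc, h1, h2]
    rfl
  · intro T
    have hU : IsReduced (Over.mk (𝟙 (Sp k))).left := inferInstanceAs (IsReduced (Spec _))
    obtain ⟨c, hc⟩ := key (Over.mk (𝟙 (Sp k))) hU (H.law.grp _).one
    refine ⟨Over.homMk T.hom (Category.comp_id _) ≫ c, ?_⟩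
    rw [Category.assoc, hc]
    exact H.law.comp_one _
  · intro T a
    obtain ⟨c, hc⟩ := key Y hred ((H.law.grp Y).inv i)
    refine ⟨a ≫ c, ?_⟩
    rw [Category.assoc, hc, H.law.comp_inv]

end Stmt6
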